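/- Let M ⊂ ℂ² be the quadric w = |z|² + λ(z² + z̄²) with 0 ≤ λ < 1/2, and let f(z, z̄) be a polynomial such that for every c > 0, f restricted to the ellipse {z : |z|² + λ(z² + z̄²) = c} extends continuously to the closed region it bounds and holomorphically to its interior. Then there exists a holomorphic polynomial P(z, w) with P(z, |z|² + λ(z² + z̄²)) = f(z, z̄) for all z. Moreover if f is homogeneous of degree d in (z, z̄), then P has weighted degree d where z has weight 1 and w has weight 2, i.e., P(z,w) = Σ_{j+2k=d} c_{j,k} z^j w^k. -/

import Mathlib

/-!
Write `q = |z|² + 2 Re (λ z²)`. Modulo `q` the monomials `zⁱ z̄ⁿ⁻ⁱ` of degree `n` satisfy a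
three-term recurrence which is diagonally dominant because `2|λ| < 1`, so they are combinations of
`zⁿ` and `z̄ⁿ`. Hence every polynomial in `z, z̄` is `P(z, q) + z̄ R(z̄, q)`, with the degree in
`z, z̄` equal to the weighted degree of `P`; this solves the Dirichlet problem on all the ellipses
`q = c` at once. If the restriction to `q = c` extends holomorphically, then `z̄ R(z̄, c)` has the
same boundary values as a holomorphic function, and the maximum principle forces it to be constant,
i.e. `R(·, c) = 0`. This can happen for infinitely many `c` only if `R = 0`.
-/

open Polynomial Set Bornology
open scoped Polynomial.Bivariate ComplexConjugate

theorem eq_zero_of_three_term_recurrence {𝕜 E : Type*} [NormedField 𝕜] [NormedAddCommGroup E]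
    [NormedSpace 𝕜 E] {α β : 𝕜} (hαβ : ‖α‖ + ‖β‖ < 1) {u : ℕ → E} {n : ℕ}
    (h_left : u 0 = 0) (h_right : u n = 0)
    (h_rec : ∀ i, i + 2 ≤ n → u (i + 1) + α • u (i + 2) + β • u i = 0) :
    ∀ i ≤ n, u i = 0 := by
  obtain ⟨m, hm, hmax⟩ := (Finset.range (n + 1)).exists_max_image (‖u ·‖) ⟨0, by simp⟩
  replace hmax : ∀ i ≤ n, ‖u i‖ ≤ ‖u m‖ := fun i hi => hmax i (by simpa [Nat.lt_succ_iff] using hi)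
  suffices hum : u m = 0 from fun i hi => by simpa [hum] using hmax i hi
  rcases m with _ | i
  · exact h_left
  obtain rfl | hi : i + 1 = n ∨ i + 2 ≤ n := by grind
  · exact h_right
  have h_solve : u (i + 1) = -(α • u (i + 2) + β • u i) := by
    rw [eq_neg_iff_add_eq_zero, ← add_assoc, h_rec i hi]
  have h_contract : ‖u (i + 1)‖ ≤ (‖α‖ + ‖β‖) * ‖u (i + 1)‖ := calc
    ‖u (i + 1)‖ ≤ ‖α‖ * ‖u (i + 2)‖ + ‖β‖ * ‖u i‖ := by
      rw [h_solve, norm_neg, ← norm_smul, ← norm_smul]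
      exact norm_add_le _ _
    _ ≤ ‖α‖ * ‖u (i + 1)‖ + ‖β‖ * ‖u (i + 1)‖ := by
      gcongr
      exacts [hmax _ hi, hmax _ (by omega)]
    _ = _ := by ring
  exact norm_le_zero_iff.1 (by nlinarith [norm_nonneg (u (i + 1))])

/-- The bivariate polynomials `P(X, Y)` all of whose monomials have weight in `S`, where `X` has
weight `1` and the outer variable `Y` has weight `2`. -/
def polynomialsOfWeight (R : Type*) [CommSemiring R] (S : Set ℕ) : Submodule R R[X][Y] where
  carrier := {P | ∀ i l, (P.coeff l).coeff i ≠ 0 → i + 2 * l ∈ S}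
  zero_mem' := by simp
  add_mem' {P₁ P₂} hP₁ hP₂ i l h := by
    rw [coeff_add, coeff_add] at h
    by_cases h₁ : (P₁.coeff l).coeff i = 0
    · exact hP₂ i l (by simpa [h₁] using h)
    · exact hP₁ i l h₁
  smul_mem' r P hP i l h := hP i l (right_ne_zero_of_mul (by simpa using h))

section Bivariate

variable {R : Type*} [CommSemiring R]

theorem polynomialsOfWeight_mono {S T : Set ℕ} (h : S ⊆ T) :
    polynomialsOfWeight R S ≤ polynomialsOfWeight R T :=
  fun _ hP i l hil => h (hP i l hil)

theorem C_X_pow_mem_polynomialsOfWeight (n : ℕ) :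
    (C (X ^ n) : R[X][Y]) ∈ polynomialsOfWeight R {n} := by
  intro i l h
  rw [coeff_C] at h
  split_ifs at h with hl
  · rw [coeff_X_pow] at h
    simp_all
  · simp at h

theorem mul_Y_mem_polynomialsOfWeight {n : ℕ} {P : R[X][Y]} (hP : P ∈ polynomialsOfWeight R {n}) :
    P * Y ∈ polynomialsOfWeight R {n + 2} := by
  rintro i (_ | l) h
  · simp at h
  · rw [coeff_mul_X] at h
    have h_weight : i + 2 * l = n := hP i l h
    simpa using (by omega : i + 2 * (l + 1) = n + 2)

theorem exists_evalEval_eq_sum_range (P : R[X][Y]) :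
    ∃ M, ∀ x y, P.evalEval x y =
      ∑ j ∈ Finset.range M, ∑ k ∈ Finset.range M, (P.coeff k).coeff j * x ^ j * y ^ k := by
  let D := P.support.sup fun k => (P.coeff k).natDegree
  refine ⟨P.natDegree + D + 1, fun x y => ?_⟩
  have h_coeff (k : ℕ) : (P.coeff k).natDegree ≤ D := by
    by_cases hk : k ∈ P.support
    · exact Finset.le_sup (f := fun k => (P.coeff k).natDegree) hk
    · simp [notMem_support_iff.1 hk]
  have h_outer : P.natDegree < P.natDegree + D + 1 := by omega
  have h_inner (k : ℕ) : (P.coeff k).natDegree < P.natDegree + D + 1 :=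
    Nat.lt_succ_of_le ((h_coeff k).trans (Nat.le_add_left _ _))
  rw [evalEval, eval_eq_sum_range' h_outer, eval_finsetSum, Finset.sum_comm]
  refine Finset.sum_congr rfl fun k _ => ?_
  rw [eval_mul, eval_pow, eval_C, eval_eq_sum_range' (h_inner k), Finset.sum_mul]

theorem aevalAeval_pi_apply {ι : Type*} (x y : ι → R) (P : R[X][Y]) (t : ι) :
    aevalAeval x y P t = P.evalEval (x t) (y t) := by
  rw [← coe_aevalAeval_eq_evalEval]
  have h_comp : (Pi.evalAlgHom R (fun _ => R) t).comp (aevalAeval x y) =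
      aevalAeval (x t) (y t) := by
    ext <;> simp
  exact DFunLike.congr_fun h_comp P

end Bivariate

section LevelwiseHarmonic

/-- The elements `P(x, q) + y R(y, q)` with `P` of weight in `S`. For `x = z`, `y = z̄` and a real
quadratic form `q`, such a function agrees on each level set of `q` with a harmonic polynomial. The
factor `y` keeps the powers of `q` out of the second summand. -/
noncomputable def levelwiseHarmonic (𝕜 : Type*) {A : Type*} [CommSemiring 𝕜] [CommSemiring A]
    [Algebra 𝕜 A] (x y q : A) (S : Set ℕ) : Submodule 𝕜 A :=
  (polynomialsOfWeight 𝕜 S).map (aevalAeval x q).toLinearMap ⊔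
    LinearMap.range (LinearMap.mulLeft 𝕜 y ∘ₗ (aevalAeval (R := 𝕜) y q).toLinearMap)

section CommSemiring

variable {𝕜 A : Type*} [CommSemiring 𝕜] [CommSemiring A] [Algebra 𝕜 A]

theorem mem_levelwiseHarmonic {x y q v : A} {S : Set ℕ} :
    v ∈ levelwiseHarmonic 𝕜 x y q S ↔
      ∃ P ∈ polynomialsOfWeight 𝕜 S, ∃ R : 𝕜[X][Y],
        aevalAeval x q P + y * aevalAeval y q R = v := by
  simp [levelwiseHarmonic, Submodule.mem_sup]

theorem levelwiseHarmonic_mono {x y q : A} {S T : Set ℕ} (h : S ⊆ T) :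
    levelwiseHarmonic 𝕜 x y q S ≤ levelwiseHarmonic 𝕜 x y q T :=
  sup_le_sup_right (Submodule.map_mono (polynomialsOfWeight_mono h)) _

theorem left_pow_mem_levelwiseHarmonic (x y q : A) (n : ℕ) :
    x ^ n ∈ levelwiseHarmonic 𝕜 x y q {n} :=
  mem_levelwiseHarmonic.2 ⟨C (X ^ n), C_X_pow_mem_polynomialsOfWeight n, 0, by simp⟩

theorem right_pow_mem_levelwiseHarmonic (x y q : A) (n : ℕ) :
    y ^ n ∈ levelwiseHarmonic 𝕜 x y q {n} := by
  rcases n with _ | n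
  · simpa using left_pow_mem_levelwiseHarmonic (𝕜 := 𝕜) x y q 0
  · exact mem_levelwiseHarmonic.2 ⟨0, zero_mem _, C (X ^ n), by simp [pow_succ']⟩

theorem level_mul_mem_levelwiseHarmonic {x y q v : A} {n : ℕ}
    (hv : v ∈ levelwiseHarmonic 𝕜 x y q {n}) : q * v ∈ levelwiseHarmonic 𝕜 x y q {n + 2} := by
  obtain ⟨P, hP, R, rfl⟩ := mem_levelwiseHarmonic.1 hv
  refine mem_levelwiseHarmonic.2 ⟨P * Y, mul_Y_mem_polynomialsOfWeight hP, R * Y, ?_⟩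
  rw [map_mul, map_mul, aevalAeval_Y, aevalAeval_Y]
  ring

end CommSemiring

variable {𝕜 A : Type*} [NormedField 𝕜] [CommRing A] [Algebra 𝕜 A]

theorem pow_mul_pow_mem_levelwiseHarmonic {α β : 𝕜} (hαβ : ‖α‖ + ‖β‖ < 1) {x y q : A}
    (hq : q = x * y + α • x ^ 2 + β • y ^ 2) (n : ℕ) :
    ∀ i ≤ n, x ^ i * y ^ (n - i) ∈ levelwiseHarmonic 𝕜 x y q {n} := by
  induction n using Nat.strong_induction_on with | _ n ih =>
  intro i hi
  by_contra h_notMem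
  obtain ⟨φ, hφ, hφ_ker⟩ := Submodule.exists_le_ker_of_notMem h_notMem
  have hφ_zero {v : A} (hv : v ∈ levelwiseHarmonic 𝕜 x y q {n}) : φ v = 0 := hφ_ker hv
  refine hφ (eq_zero_of_three_term_recurrence (u := fun i => φ (x ^ i * y ^ (n - i))) hαβ
    ?_ ?_ (fun i hi => ?_) i hi)
  · simpa using hφ_zero (right_pow_mem_levelwiseHarmonic x y q n)
  · simpa using hφ_zero (left_pow_mem_levelwiseHarmonic x y q n)
  obtain ⟨m, rfl⟩ := Nat.exists_eq_add_of_le' hi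
  have h_mul : q * (x ^ i * y ^ (m + i - i)) ∈ levelwiseHarmonic 𝕜 x y q {m + i + 2} :=
    level_mul_mem_levelwiseHarmonic (ih (m + i) (by omega) i (by omega))
  have h_expand : q * (x ^ i * y ^ m) =
      x ^ (i + 1) * y ^ (m + 1) + α • (x ^ (i + 2) * y ^ m) + β • (x ^ i * y ^ (m + 2)) := by
    rw [hq]
    simp only [Algebra.smul_def]
    ring
  rw [Nat.add_sub_cancel, h_expand] at h_mul
  have h_sub₁ : m + (i + 2) - (i + 1) = m + 1 := by omega
  have h_sub₂ : m + (i + 2) - i = m + 2 := by omega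
  simpa [h_sub₁, h_sub₂] using hφ_zero h_mul

theorem sum_mem_levelwiseHarmonic {α β : 𝕜} (hαβ : ‖α‖ + ‖β‖ < 1) {x y q : A}
    (hq : q = x * y + α • x ^ 2 + β • y ^ 2) (s t : Finset ℕ) (a : ℕ → ℕ → 𝕜) :
    ∑ j ∈ s, ∑ k ∈ t, a j k • (x ^ j * y ^ k) ∈
      levelwiseHarmonic 𝕜 x y q {n | ∃ j k, a j k ≠ 0 ∧ j + k = n} := by
  refine sum_mem fun j _ => sum_mem fun k _ => ?_
  by_cases hjk : a j k = 0
  · rw [hjk, zero_smul]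
    exact zero_mem _
  · refine Submodule.smul_mem _ _ (levelwiseHarmonic_mono (S := {j + k}) ?_ ?_)
    · simpa using ⟨j, k, hjk, rfl⟩
    · simpa using pow_mul_pow_mem_levelwiseHarmonic hαβ hq (j + k) j (by omega)

end LevelwiseHarmonic

section FrontierValues

variable {U : Set ℂ} {g h : ℂ → ℂ}

theorem im_nonpos_of_forall_frontier_im_nonpos (hU : IsBounded U) (hg : DiffContOnCl ℂ g U)
    (h_frontier : ∀ z ∈ frontier U, (g z).im ≤ 0) {z : ℂ} (hz : z ∈ U) : (g z).im ≤ 0 := by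
  have h_norm (w : ℂ) : ‖Complex.exp (-Complex.I * g w)‖ = Real.exp (g w).im := by
    simp [Complex.norm_exp]
  have h_exp : DiffContOnCl ℂ (fun w => Complex.exp (-Complex.I * g w)) U :=
    Complex.differentiable_exp.comp_diffContOnCl (hg.const_smul (-Complex.I))
  have h_le := Complex.norm_le_of_forall_mem_frontier_norm_le hU h_exp (C := 1)
    (fun w hw => by rw [h_norm]; exact Real.exp_le_one_iff.2 (h_frontier w hw)) (subset_closure hz)
  rwa [h_norm, Real.exp_le_one_iff] at h_le

theorem im_eq_zero_of_forall_frontier_im_eq_zero (hU : IsBounded U) (hg : DiffContOnCl ℂ g U)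
    (h_frontier : ∀ z ∈ frontier U, (g z).im = 0) {z : ℂ} (hz : z ∈ U) : (g z).im = 0 := by
  refine le_antisymm
    (im_nonpos_of_forall_frontier_im_nonpos hU hg (fun w hw => (h_frontier w hw).le) hz) ?_
  simpa using im_nonpos_of_forall_frontier_im_nonpos hU hg.neg
    (fun w hw => by simp [h_frontier w hw]) hz

theorem eqOn_conj_of_eqOn_conj_frontier (hU : IsBounded U) (hg : DiffContOnCl ℂ g U)
    (hh : DiffContOnCl ℂ h U) (h_frontier : EqOn g (fun z => conj (h z)) (frontier U)) :
    EqOn g (fun z => conj (h z)) U := by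
  intro z hz
  have h_add := im_eq_zero_of_forall_frontier_im_eq_zero hU (hg.add hh)
    (fun w hw => by simp [h_frontier hw]) hz
  have h_sub := im_eq_zero_of_forall_frontier_im_eq_zero hU ((hg.sub hh).const_smul Complex.I)
    (fun w hw => by simp [h_frontier hw]) hz
  apply Complex.ext
  · simpa [sub_eq_zero] using h_sub
  · simpa [add_eq_zero_iff_eq_neg] using h_add

theorem deriv_eq_zero_of_differentiableAt_conj {z : ℂ} (hg : DifferentiableAt ℂ g z)
    (h_conj : DifferentiableAt ℂ (fun w => conj (g w)) z) : deriv g z = 0 := by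
  have h_fderiv : (fderiv ℂ (fun w => conj (g w)) z).restrictScalars ℝ =
      Complex.conjCLE.toContinuousLinearMap.comp ((fderiv ℂ g z).restrictScalars ℝ) :=
    (h_conj.hasFDerivAt.restrictScalars ℝ).unique
      (Complex.conjCLE.hasFDerivAt.comp z (hg.hasFDerivAt.restrictScalars ℝ))
  have h_conj_linear (v : ℂ) : v * deriv (fun w => conj (g w)) z = conj v * conj (deriv g z) := by
    simpa [fderiv_eq_smul_deriv] using DFunLike.congr_fun h_fderiv v
  have h_one := h_conj_linear 1
  have h_I := h_conj_linear Complex.I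
  rw [map_one, one_mul, one_mul] at h_one
  rw [h_one, Complex.conj_I, neg_mul, self_eq_neg] at h_I
  simpa using h_I

theorem natDegree_eq_zero_of_eqOn_frontier_eval_conj (hU_open : IsOpen U) (hU : IsBounded U)
    (hU_ne : U.Nonempty) (hg : DiffContOnCl ℂ g U) {p : ℂ[X]}
    (h_frontier : EqOn g (fun z => p.eval (conj z)) (frontier U)) : p.natDegree = 0 := by
  let k : ℂ → ℂ := fun z => conj (p.eval (conj z))
  have hk (z : ℂ) : HasDerivAt k (conj (p.derivative.eval (conj z))) z := by
    simpa [Function.comp_def] using (p.hasDerivAt (conj z)).conj_conj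
  have hk_diff : Differentiable ℂ k := fun z => (hk z).differentiableAt
  have h_eqOn : EqOn g (fun z => conj (k z)) U := eqOn_conj_of_eqOn_conj_frontier hU hg
    hk_diff.diffContOnCl (fun z hz => by simpa [k] using h_frontier hz)
  have h_root : conj '' U ⊆ {w | p.derivative.IsRoot w} := by
    rintro _ ⟨z, hz, rfl⟩
    have h_conj : DifferentiableAt ℂ (fun w => conj (k w)) z :=
      (hg.differentiableAt hU_open hz).congr_of_eventuallyEq
        (h_eqOn.symm.eventuallyEq_of_mem (hU_open.mem_nhds hz))
    have h_deriv := deriv_eq_zero_of_differentiableAt_conj (hk_diff z) h_conj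
    rwa [(hk z).deriv, map_eq_zero] at h_deriv
  obtain ⟨z, hz⟩ := hU_ne
  have hU_inf : U.Infinite := infinite_of_mem_nhds z (hU_open.mem_nhds hz)
  exact derivative_eq_zero.1 (eq_zero_of_infinite_isRoot _
    ((hU_inf.image (RingHom.injective _).injOn).mono h_root))

end FrontierValues

/-- The real quadratic form `|z|² + λ z² + λ̄ z̄²`, whose graph in `ℂ²` is the Bishop quadric. The
parameter `λ` is complex; a rotation of `z` makes it real and nonnegative. -/
noncomputable def bishopForm (lam z : ℂ) : ℝ := ‖z‖ ^ 2 + 2 * (lam * z ^ 2).re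

/-- `f` agrees on the frontier of `U` with a function that is holomorphic in `U` and continuous up
to the frontier. The values of `f` inside `U` do not matter. -/
def ExtendsHolomorphically (f : ℂ → ℂ) (U : Set ℂ) : Prop :=
  ∃ g, DiffContOnCl ℂ g U ∧ EqOn g f (frontier U)

theorem extendsHolomorphically_of_sublevel {f g : ℂ → ℂ} {Q : ℂ → ℝ} (hQ : Continuous Q) {c : ℝ}
    (hg_cont : ContinuousOn g {z | Q z ≤ c}) (hg_diff : DifferentiableOn ℂ g {z | Q z < c})
    (hfg : ∀ z, Q z = c → g z = f z) : ExtendsHolomorphically f {z | Q z < c} :=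
  ⟨g, ⟨hg_diff, hg_cont.mono (closure_lt_subset_le hQ continuous_const)⟩,
    fun z hz => hfg z (frontier_lt_subset_eq hQ continuous_const hz)⟩

section BishopForm

variable {lam : ℂ}

theorem ofReal_bishopForm (lam z : ℂ) :
    (bishopForm lam z : ℂ) = z * conj z + lam * z ^ 2 + conj lam * conj z ^ 2 := by
  have h_re : ((2 * (lam * z ^ 2).re : ℝ) : ℂ) = lam * z ^ 2 + conj (lam * z ^ 2) :=
    (Complex.add_conj _).symm
  rw [bishopForm, Complex.ofReal_add, h_re, Complex.mul_conj, Complex.normSq_eq_norm_sq, map_mul,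
    map_pow, add_assoc]

@[fun_prop]
theorem continuous_bishopForm (lam : ℂ) : Continuous (bishopForm lam) := by
  unfold bishopForm
  fun_prop

theorem mul_norm_sq_le_bishopForm (lam z : ℂ) : (1 - 2 * ‖lam‖) * ‖z‖ ^ 2 ≤ bishopForm lam z := by
  have h_re : -(‖lam‖ * ‖z‖ ^ 2) ≤ (lam * z ^ 2).re := by
    rw [← norm_pow, ← norm_mul]
    exact (abs_le.1 (Complex.abs_re_le_norm _)).1
  unfold bishopForm
  linarith

theorem isBounded_bishopForm_lt (hlam : ‖lam‖ < 1 / 2) (c : ℝ) :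
    IsBounded {z | bishopForm lam z < c} := by
  refine (Metric.isBounded_closedBall (x := 0) (r := √(c / (1 - 2 * ‖lam‖)))).subset fun z hz => ?_
  rw [mem_closedBall_zero_iff]
  refine Real.le_sqrt_of_sq_le ((le_div_iff₀' (by linarith)).2 ?_)
  exact (mul_norm_sq_le_bishopForm lam z).trans (le_of_lt hz)

theorem eval_C_eq_zero_of_extendsHolomorphically (hlam : ‖lam‖ < 1 / 2) {P R : ℂ[X][Y]} {c : ℝ}
    (hc : 0 < c)
    (hext : ExtendsHolomorphically
      (fun z => P.evalEval z (bishopForm lam z) + conj z * R.evalEval (conj z) (bishopForm lam z))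
      {z | bishopForm lam z < c}) :
    R.eval (C (c : ℂ)) = 0 := by
  obtain ⟨g, hg, h_frontier⟩ := hext
  have h_open : IsOpen {z | bishopForm lam z < c} :=
    isOpen_lt (continuous_bishopForm lam) continuous_const
  have h_zero_mem : (0 : ℂ) ∈ {z | bishopForm lam z < c} := by simpa [bishopForm] using hc
  have h_natDegree : (X * R.eval (C (c : ℂ))).natDegree = 0 := by
    refine natDegree_eq_zero_of_eqOn_frontier_eval_conj h_open (isBounded_bishopForm_lt hlam c)
      ⟨0, h_zero_mem⟩ (hg.sub (P.eval (C (c : ℂ))).differentiable.diffContOnCl) fun z hz => ?_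
    have h_level : bishopForm lam z = c :=
      frontier_lt_subset_eq (continuous_bishopForm lam) continuous_const hz
    simp [h_frontier hz, h_level, evalEval]
  by_contra h_ne
  simp [natDegree_X_mul h_ne] at h_natDegree

theorem eq_zero_of_infinite_extendsHolomorphically (hlam : ‖lam‖ < 1 / 2) {P R : ℂ[X][Y]}
    (hext : {c : ℝ | 0 < c ∧ ExtendsHolomorphically
      (fun z => P.evalEval z (bishopForm lam z) + conj z * R.evalEval (conj z) (bishopForm lam z))
      {z | bishopForm lam z < c}}.Infinite) :
    R = 0 := by
  have h_inj : Function.Injective fun c : ℝ => C (c : ℂ) :=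
    C_injective.comp Complex.ofReal_injective
  refine eq_zero_of_infinite_isRoot R ((hext.image h_inj.injOn).mono ?_)
  rintro _ ⟨c, ⟨hc, hext_c⟩, rfl⟩
  exact eval_C_eq_zero_of_extendsHolomorphically hlam hc hext_c

theorem exists_evalEval_add_conj_mul_evalEval (hlam : ‖lam‖ < 1 / 2) (s t : Finset ℕ)
    (a : ℕ → ℕ → ℂ) :
    ∃ P ∈ polynomialsOfWeight ℂ {n | ∃ j k, a j k ≠ 0 ∧ j + k = n}, ∃ R : ℂ[X][Y], ∀ z : ℂ,
      ∑ j ∈ s, ∑ k ∈ t, a j k * z ^ j * conj z ^ k =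
        P.evalEval z (bishopForm lam z) + conj z * R.evalEval (conj z) (bishopForm lam z) := by
  have h_norm : ‖lam‖ + ‖conj lam‖ < 1 := by
    rw [RCLike.norm_conj]
    linarith
  have h_form : (fun z : ℂ => (bishopForm lam z : ℂ)) =
      (fun z => z) * (fun z => conj z) + lam • (fun z => z) ^ 2 +
        conj lam • (fun z => conj z) ^ 2 :=
    funext fun z => by simp [ofReal_bishopForm]
  obtain ⟨P, hP, R, hPR⟩ :=
    mem_levelwiseHarmonic.1 (sum_mem_levelwiseHarmonic h_norm h_form s t a)
  refine ⟨P, hP, R, fun z => ?_⟩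
  have hPR_z := congrFun hPR z
  simp only [Pi.add_apply, Pi.mul_apply, aevalAeval_pi_apply] at hPR_z
  simpa [mul_assoc] using hPR_z.symm

end BishopForm

theorem stmt_4_general (lam : ℂ) (hlam : ‖lam‖ < 1 / 2) (N : ℕ) (a : ℕ → ℕ → ℂ) (f : ℂ → ℂ)
    (hf : ∀ z, f z = ∑ j ∈ Finset.range N, ∑ k ∈ Finset.range N, a j k * z ^ j * conj z ^ k)
    (hext : {c : ℝ | 0 < c ∧ ExtendsHolomorphically f {z | bishopForm lam z < c}}.Infinite) :
    ∃ (M : ℕ) (b : ℕ → ℕ → ℂ),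
      (∀ z, ∑ j ∈ Finset.range M, ∑ k ∈ Finset.range M,
        b j k * z ^ j * (bishopForm lam z : ℂ) ^ k = f z) ∧
      ∀ j k, b j k ≠ 0 → ∃ j' k', a j' k' ≠ 0 ∧ j' + k' = j + 2 * k := by
  obtain ⟨P, hP, R, hPR⟩ := exists_evalEval_add_conj_mul_evalEval hlam (.range N) (.range N) a
  obtain rfl := funext fun z => (hf z).trans (hPR z)
  obtain rfl : R = 0 := eq_zero_of_infinite_extendsHolomorphically hlam hext
  obtain ⟨M, hM⟩ := exists_evalEval_eq_sum_range P
  exact ⟨M, fun j k => (P.coeff k).coeff j, fun z => by simp [hM], hP⟩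

theorem stmt_4 (lam : ℝ) (h0 : 0 ≤ lam) (h12 : lam < 1/2)
    (N : ℕ) (a : ℕ → ℕ → ℂ)
    (Q : ℂ → ℝ) (hQ : ∀ z : ℂ, Q z = ‖z‖^2 + 2 * lam * (z^2).re)
    (f : ℂ → ℂ)
    (hf : ∀ z : ℂ, f z = ∑ j ∈ Finset.range N, ∑ k ∈ Finset.range N, a j k * z^j * (star z)^k)
    (hext : ∀ c : ℝ, 0 < c → ∃ g : ℂ → ℂ,
      ContinuousOn g {z | Q z ≤ c} ∧ DifferentiableOn ℂ g {z | Q z < c} ∧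
      ∀ z, Q z = c → g z = f z) :
    ∃ (M : ℕ) (b : ℕ → ℕ → ℂ),
      (∀ z : ℂ, ∑ j ∈ Finset.range M, ∑ k ∈ Finset.range M, b j k * z^j * ((Q z : ℝ) : ℂ)^k = f z) ∧
      (∀ d : ℕ, (∀ j k, a j k ≠ 0 → j + k = d) →
        ∀ j k, j < M → k < M → b j k ≠ 0 → j + 2*k = d) := by
  obtain rfl : Q = bishopForm lam := funext fun z => by
    rw [hQ, bishopForm, Complex.re_ofReal_mul, mul_assoc]
  have hlam : ‖(lam : ℂ)‖ < 1 / 2 := by rwa [Complex.norm_of_nonneg h0]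
  have h_infinite : {c : ℝ | 0 < c ∧
      ExtendsHolomorphically f {z | bishopForm lam z < c}}.Infinite :=
    (Ioi_infinite (0 : ℝ)).mono fun c hc =>
      let ⟨_, hg_cont, hg_diff, hg⟩ := hext c hc
      ⟨hc, extendsHolomorphically_of_sublevel (continuous_bishopForm lam) hg_cont hg_diff hg⟩
  obtain ⟨M, b, hb, h_weight⟩ := stmt_4_general lam hlam N a f hf h_infinite
  refine ⟨M, b, hb, fun d hd j k _ _ hbjk => ?_⟩
  obtain ⟨j', k', ha, h_eq⟩ := h_weight j k hbjk
  exact h_eq ▸ hd j' k' ha
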